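/- Let K satisfy Assumption A, let T > 0, and let f be a mass-conserving weak solution of the coagulation equation on [0,T] with kernel K and initial datum f_in, where f_in is nonzero and is not a single Dirac measure (there are no M, V ∈ (0,∞) with f_in = M·δ_V). Then for every t ∈ (0,T] and every R > 0 there exists a constant C(t,R) > 0 such that ∫_{[R,∞)} f(dv,t) ≥ C(t,R); in particular f([R,∞),t) > 0. -/

import Mathlib

open MeasureTheory Set Filter

noncomputable section

/-- Assumption A on the coagulation kernel `K(v,v') = h(v,v') g(v/(v+v'))`. -/
structure KernelAssumptionA (K : ℝ → ℝ → ℝ) (h : ℝ → ℝ → ℝ) (g : ℝ → ℝ)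
    (γ H H₀ H₁ G₀ G₁ k : ℝ) : Prop where
  K_nonneg : ∀ v v', 0 ≤ v → 0 ≤ v' → 0 ≤ K v v'
  K_eq : ∀ v v', 0 ≤ v → 0 ≤ v' → 0 < v + v' →
      K v v' = h v v' * g (v / (v + v'))
  h_cont : ContinuousOn (fun p : ℝ × ℝ => h p.1 p.2) (Ici 0 ×ˢ Ici 0)
  h_symm : ∀ v v', h v v' = h v' v
  γ_gt_one : 1 < γ
  H_gt_one : 1 < H
  H₀_pos : 0 < H₀
  h_lower : ∀ v v', 0 ≤ v → 0 ≤ v' → H < v + v' →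
      H₀ * (v ^ γ + v' ^ γ) ≤ h v v'
  h_posOn : ∀ R : ℝ, 0 < R → ∃ C : ℝ, 0 < C ∧
      ∀ v ∈ Icc (1 / R) R, ∀ v' ∈ Icc (1 / R) R, C ≤ h v v'
  H₁_pos : 0 < H₁
  h_upper : ∀ v v', 0 ≤ v → 0 ≤ v' → h v v' ≤ H₁ * (v ^ γ + v' ^ γ)
  g_cont : ContinuousOn g (Icc 0 1)
  g_symm : ∀ x ∈ Icc (0 : ℝ) 1, g x = g (1 - x)
  g_half : g (1 / 2) = 0
  G₀_pos : 0 < G₀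
  G₁_pos : 0 < G₁
  k_ge_one : 1 ≤ k
  g_lower : ∀ x ∈ Icc (0 : ℝ) 1, G₀ * |x - 1 / 2| ^ k ≤ g x
  g_upper : ∀ x ∈ Icc (0 : ℝ) 1, g x ≤ G₁

/-- Weak solution of the coagulation equation on `[0, T]` with kernel `K`
and initial datum `fin`, in the sense of measures on `(0,∞)`. -/
structure IsWeakSolution (K : ℝ → ℝ → ℝ) (γ T : ℝ)
    (f : ℝ → Measure ℝ) (fin : Measure ℝ) : Prop where
  conc : ∀ t ∈ Icc (0 : ℝ) T, f t (Iic 0) = 0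
  time_cont : ∀ φ : ℝ → ℝ, Continuous φ → (∃ M : ℝ, ∀ v, |φ v| ≤ M) →
      ContinuousOn (fun t => ∫ v, φ v ∂(f t)) (Icc (0 : ℝ) T)
  moment_bound : ∃ C : ℝ, ∀ t ∈ Icc (0 : ℝ) T,
      Integrable (fun v => 1 + v ^ γ) (f t) ∧ (∫ v, (1 + v ^ γ) ∂(f t)) ≤ C
  weak_form : ∀ φ : ℝ → ℝ, Continuous φ → HasCompactSupport φ →
      tsupport φ ⊆ Ioi 0 → ∀ t ∈ Icc (0 : ℝ) T,
      (∫ v, φ v ∂(f t)) - (∫ v, φ v ∂fin) =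
        (1 / 2) * ∫ s in (0 : ℝ)..t,
          (∫ v, (∫ v', K v v' * (φ (v + v') - φ v - φ v') ∂(f s)) ∂(f s))

/-- The solution conserves mass on `[0, T]`. -/
def IsMassConserving (T : ℝ) (f : ℝ → Measure ℝ) (fin : Measure ℝ) : Prop :=
  Integrable (fun v => v) fin ∧
    ∀ t ∈ Icc (0 : ℝ) T,
      Integrable (fun v => v) (f t) ∧ (∫ v, v ∂(f t)) = ∫ v, v ∂fin

/-- `μ` is a single Dirac measure `M • δ_V` with `M, V ∈ (0,∞)`. -/
def IsSingleDirac (μ : Measure ℝ) : Prop :=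
  ∃ M V : ℝ, 0 < M ∧ 0 < V ∧ μ = ENNReal.ofReal M • Measure.dirac V

/-- Working data: everything globalised in time and with a measurable kernel. -/
structure CoagData (Kt : ℝ × ℝ → ℝ) (F : ℝ → Measure ℝ) (γ T C₁ C₂ : ℝ) : Prop where
  finite : ∀ s, IsFiniteMeasure (F s)
  conc : ∀ s, F s (Iic 0) = 0
  cont : ∀ φ : ℝ → ℝ, Continuous φ → (∃ M : ℝ, ∀ v, |φ v| ≤ M) →
      Continuous (fun t => ∫ v, φ v ∂(F t))
  γ_pos : 0 < γ
  C₁_nonneg : 0 ≤ C₁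
  K_meas : Measurable Kt
  K_nonneg : ∀ p, 0 ≤ Kt p
  K_le : ∀ p, Kt p ≤ C₁ * (|p.1| ^ γ + |p.2| ^ γ)
  K_pos : ∀ v v', 0 < v → 0 < v' → v ≠ v' → 0 < Kt (v, v')
  w_int : ∀ s, Integrable (fun v : ℝ => |v| ^ γ) (F s)
  w_le : ∀ s, ∫ v, |v| ^ γ ∂(F s) ≤ C₂
  univ_le : ∀ s, (F s).real univ ≤ C₂
  weak : ∀ φ : ℝ → ℝ, Continuous φ → HasCompactSupport φ →
      tsupport φ ⊆ Ioi 0 → ∀ t ∈ Icc (0 : ℝ) T,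
      (∫ v, φ v ∂(F t)) - (∫ v, φ v ∂(F 0)) =
        (1 / 2) * ∫ s in (0 : ℝ)..t,
          ∫ p, Kt p * (φ (p.1 + p.2) - φ p.1 - φ p.2) ∂((F s).prod (F s))

lemma measurable_family (F : ℝ → Measure ℝ) [∀ s, IsFiniteMeasure (F s)]
    (hc : ∀ φ : ℝ → ℝ, Continuous φ → (∃ M : ℝ, ∀ v, |φ v| ≤ M) →
      Continuous (fun t => ∫ v, φ v ∂(F t))) : Measurable F := by
  have key : ∀ A : Set ℝ, IsClosed A → Measurable fun s => F s A := by
    intro A hA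
    have h1 : Measurable fun s => (F s).real A := by
      have hpos : ∀ n : ℕ, (0 : ℝ) < 1 / ((n : ℝ) + 1) := fun n => by positivity
      refine measurable_of_tendsto_metrizable
        (f := fun (n : ℕ) s => ∫ ω, (thickenedIndicator (hpos n) A ω : ℝ) ∂(F s)) ?_ ?_
      · intro n
        refine (hc _ ?_ ⟨1, ?_⟩).measurable
        · exact NNReal.continuous_coe.comp (thickenedIndicator (hpos n) A).continuous
        · intro v
          rw [abs_of_nonneg (NNReal.coe_nonneg _)]
          exact_mod_cast thickenedIndicator_le_one (hpos n) A v
      · rw [tendsto_pi_nhds]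
        intro s
        exact tendsto_integral_thickenedIndicator_of_isClosed (F s) hA hpos
          tendsto_one_div_add_atTop_nhds_zero_nat
    have h2 : (fun s => F s A) = fun s => ENNReal.ofReal ((F s).real A) := by
      ext s; simp
    rw [h2]
    exact h1.ennreal_ofReal
  refine Measurable.measure_of_isPiSystem (S := {s | IsClosed s}) ?_ isPiSystem_isClosed
    key (key _ isClosed_univ)
  rw [← borel_eq_generateFrom_isClosed]
  exact BorelSpace.measurable_eq

namespace CoagData

variable {Kt : ℝ × ℝ → ℝ} {F : ℝ → Measure ℝ} {γ T C₁ C₂ : ℝ}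

lemma C₂_nonneg (D : CoagData Kt F γ T C₁ C₂) : 0 ≤ C₂ :=
  le_trans measureReal_nonneg (D.univ_le 0)

lemma K_int (D : CoagData Kt F γ T C₁ C₂) (s : ℝ) :
    Integrable (fun p : ℝ × ℝ => C₁ * (|p.1| ^ γ + |p.2| ^ γ)) ((F s).prod (F s)) := by
  have := D.finite s
  exact (((D.w_int s).comp_fst (F s)).add ((D.w_int s).comp_snd (F s))).const_mul C₁

lemma K_int_le (D : CoagData Kt F γ T C₁ C₂) (s : ℝ) :
    ∫ p : ℝ × ℝ, C₁ * (|p.1| ^ γ + |p.2| ^ γ) ∂((F s).prod (F s)) ≤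
      C₁ * (2 * C₂ * C₂) := by
  have := D.finite s
  rw [integral_const_mul]
  refine mul_le_mul_of_nonneg_left ?_ D.C₁_nonneg
  rw [integral_add ((D.w_int s).comp_fst (F s)) ((D.w_int s).comp_snd (F s))]
  rw [integral_fun_fst (fun v : ℝ => |v| ^ γ), integral_fun_snd (fun v : ℝ => |v| ^ γ)]
  have h0 : 0 ≤ ∫ v, |v| ^ γ ∂(F s) := integral_nonneg fun v => by positivity
  have h1 := D.w_le s
  have h2 := D.univ_le s
  have h3 : 0 ≤ (F s).real univ := measureReal_nonneg
  have := mul_le_mul h2 h1 h0 D.C₂_nonneg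
  simp only [smul_eq_mul]
  linarith

lemma intg_bound (D : CoagData Kt F γ T C₁ C₂) {φ : ℝ → ℝ} {M : ℝ}
    (hM : ∀ v, |φ v| ≤ M) (p : ℝ × ℝ) :
    ‖Kt p * (φ (p.1 + p.2) - φ p.1 - φ p.2)‖ ≤
      (3 * M) * (C₁ * (|p.1| ^ γ + |p.2| ^ γ)) := by
  rw [norm_mul, Real.norm_eq_abs, Real.norm_eq_abs, abs_of_nonneg (D.K_nonneg p), mul_comm]
  have h1 := hM (p.1 + p.2)
  have h2 := hM p.1
  have h3 := hM p.2
  rw [abs_le] at h1 h2 h3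
  refine mul_le_mul ?_ (D.K_le p) (D.K_nonneg p) ?_
  · rw [abs_le]; constructor <;> linarith
  · linarith

lemma intg_meas (D : CoagData Kt F γ T C₁ C₂) {φ : ℝ → ℝ} (hφ : Continuous φ) :
    StronglyMeasurable fun p : ℝ × ℝ => Kt p * (φ (p.1 + p.2) - φ p.1 - φ p.2) := by
  have h := D.K_meas
  have h2 : Continuous fun p : ℝ × ℝ => (φ (p.1 + p.2) - φ p.1 - φ p.2) := by fun_prop
  exact (h.mul h2.measurable).stronglyMeasurable

lemma intg_int (D : CoagData Kt F γ T C₁ C₂) {φ : ℝ → ℝ} (hφ : Continuous φ) {M : ℝ}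
    (hM : ∀ v, |φ v| ≤ M) (s : ℝ) :
    Integrable (fun p : ℝ × ℝ => Kt p * (φ (p.1 + p.2) - φ p.1 - φ p.2))
      ((F s).prod (F s)) :=
  ((D.K_int s).const_mul (3 * M)).mono' (D.intg_meas hφ).aestronglyMeasurable
    (Eventually.of_forall fun p => D.intg_bound hM p)

lemma time_int (D : CoagData Kt F γ T C₁ C₂) {φ : ℝ → ℝ} (hφ : Continuous φ) {M : ℝ}
    (hM : ∀ v, |φ v| ≤ M) (a b : ℝ) :
    IntervalIntegrable (fun s => ∫ p, Kt p * (φ (p.1 + p.2) - φ p.1 - φ p.2)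
      ∂((F s).prod (F s))) volume a b := by
  have hfin := D.finite
  have hmeas := measurable_family F D.cont
  let κ : ProbabilityTheory.Kernel ℝ ℝ := ⟨F, hmeas⟩
  have hκ : ∀ s, κ s = F s := fun s => rfl
  have : ProbabilityTheory.IsFiniteKernel κ := by
    refine ⟨⟨ENNReal.ofReal C₂, ENNReal.ofReal_lt_top, fun s => ?_⟩⟩
    rw [hκ]
    have := D.univ_le s
    rw [← ENNReal.ofReal_toReal (measure_ne_top (F s) univ)]
    exact ENNReal.ofReal_le_ofReal this
  have hsm : StronglyMeasurable (fun s => ∫ p, Kt p * (φ (p.1 + p.2) - φ p.1 - φ p.2)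
      ∂((F s).prod (F s))) := by
    have := (D.intg_meas hφ).integral_kernel (κ := κ.prod κ)
    simpa only [ProbabilityTheory.Kernel.prod_apply, hκ] using this
  refine (intervalIntegrable_const (c := (3 * M) * (C₁ * (2 * C₂ * C₂)))).mono_fun
    hsm.aestronglyMeasurable (Eventually.of_forall fun s => ?_)
  have hM0 : 0 ≤ M := le_trans (abs_nonneg _) (hM 0)
  refine le_trans (norm_integral_le_of_norm_le ((D.K_int s).const_mul (3 * M))
    (Eventually.of_forall fun p => D.intg_bound hM p)) ?_
  rw [integral_const_mul]
  refine le_trans ?_ (le_abs_self _)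
  exact mul_le_mul_of_nonneg_left (D.K_int_le s) (by linarith)

/-- lower bound of the collision operator -/
lemma lower (D : CoagData Kt F γ T C₁ C₂) {φ : ℝ → ℝ} (hφ : Continuous φ) {M B : ℝ}
    (hM : ∀ v, |φ v| ≤ M) (h0 : ∀ v, 0 ≤ φ v) (hB : ∀ v, φ v ≠ 0 → |v| ^ γ ≤ B)
    (hB0 : 0 ≤ B) (s : ℝ) :
    (∫ p, Kt p * φ (p.1 + p.2) ∂((F s).prod (F s))) -
      (C₁ * (2 * (B * C₂ + C₂))) * ∫ v, φ v ∂(F s) ≤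
    ∫ p, Kt p * (φ (p.1 + p.2) - φ p.1 - φ p.2) ∂((F s).prod (F s)) := by
  have := D.finite s
  have hφi : Integrable φ (F s) :=
    (integrable_const M).mono' hφ.aestronglyMeasurable (Eventually.of_forall hM)
  have hwi : Integrable (fun v : ℝ => B + |v| ^ γ) (F s) := (integrable_const B).add (D.w_int s)
  have hP : Integrable (fun p : ℝ × ℝ => φ p.1 * (B + |p.2| ^ γ)) ((F s).prod (F s)) :=
    hφi.mul_prod hwi
  have hQ : Integrable (fun p : ℝ × ℝ => (B + |p.1| ^ γ) * φ p.2) ((F s).prod (F s)) :=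
    hwi.mul_prod hφi
  have hK : Integrable (fun p : ℝ × ℝ => Kt p * φ (p.1 + p.2)) ((F s).prod (F s)) := by
    refine ((D.K_int s).const_mul M).mono' ?_ (Eventually.of_forall fun p => ?_)
    · have h2 : Continuous fun p : ℝ × ℝ => φ (p.1 + p.2) := by fun_prop
      exact (D.K_meas.mul h2.measurable).aestronglyMeasurable
    · rw [norm_mul, Real.norm_eq_abs, Real.norm_eq_abs, abs_of_nonneg (D.K_nonneg p), mul_comm]
      exact mul_le_mul (hM _) (D.K_le p) (D.K_nonneg p) (le_trans (abs_nonneg _) (hM 0))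
  have hRi := (hP.add hQ).const_mul C₁
  have hmain := integral_mono (hK.sub hRi) (D.intg_int hφ hM s) (by
    intro p
    simp only [Pi.sub_apply, Pi.add_apply]
    have e1 : Kt p * φ p.1 ≤ C₁ * (φ p.1 * (B + |p.2| ^ γ)) := by
      by_cases h : φ p.1 = 0
      · simp [h]
      · have a1 := hB _ h
        have a2 : Kt p ≤ C₁ * (B + |p.2| ^ γ) := (D.K_le p).trans
          (mul_le_mul_of_nonneg_left (by linarith) D.C₁_nonneg)
        have := mul_le_mul_of_nonneg_right a2 (h0 p.1)
        linarith
    have e2 : Kt p * φ p.2 ≤ C₁ * ((B + |p.1| ^ γ) * φ p.2) := by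
      by_cases h : φ p.2 = 0
      · simp [h]
      · have a1 := hB _ h
        have a2 : Kt p ≤ C₁ * (B + |p.1| ^ γ) := (D.K_le p).trans
          (mul_le_mul_of_nonneg_left (by linarith) D.C₁_nonneg)
        have := mul_le_mul_of_nonneg_right a2 (h0 p.2)
        linarith
    linarith)
  refine le_trans ?_ hmain
  have hsub := integral_sub hK hRi
  simp only [Pi.sub_apply, Pi.add_apply] at hsub ⊢
  rw [hsub, integral_const_mul, integral_add hP hQ,
    integral_prod_mul φ (fun v : ℝ => B + |v| ^ γ),
    integral_prod_mul (fun v : ℝ => B + |v| ^ γ) φ]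
  have hw : ∫ v, (B + |v| ^ γ) ∂(F s) ≤ B * C₂ + C₂ := by
    rw [integral_add (integrable_const B) (D.w_int s)]
    have := mul_le_mul_of_nonneg_left (D.univ_le s) hB0
    have := D.w_le s
    simp only [integral_const, smul_eq_mul]
    linarith
  have hy : 0 ≤ ∫ v, φ v ∂(F s) := integral_nonneg h0
  have h3 := mul_le_mul_of_nonneg_left
    (mul_le_mul_of_nonneg_right hw hy) D.C₁_nonneg
  linarith

/-- positivity of the gain term -/
lemma gain_pos (D : CoagData Kt F γ T C₁ C₂) {φ : ℝ → ℝ} (hφ : Continuous φ) {M : ℝ}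
    (hM : ∀ v, |φ v| ≤ M) (h0 : ∀ v, 0 ≤ φ v) (s : ℝ) {p q : ℝ} (hp : 0 < p) (hq : 0 < q)
    (hpq : p ≠ q) (hsp : p ∈ (F s).support) (hsq : q ∈ (F s).support) (hc : 0 < φ (p + q)) :
    0 < ∫ p, Kt p * φ (p.1 + p.2) ∂((F s).prod (F s)) := by
  have := D.finite s
  have hK : Integrable (fun p : ℝ × ℝ => Kt p * φ (p.1 + p.2)) ((F s).prod (F s)) := by
    refine ((D.K_int s).const_mul M).mono' ?_ (Eventually.of_forall fun p => ?_)
    · have h2 : Continuous fun p : ℝ × ℝ => φ (p.1 + p.2) := by fun_prop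
      exact (D.K_meas.mul h2.measurable).aestronglyMeasurable
    · rw [norm_mul, Real.norm_eq_abs, Real.norm_eq_abs, abs_of_nonneg (D.K_nonneg p), mul_comm]
      exact mul_le_mul (hM _) (D.K_le p) (D.K_nonneg p) (le_trans (abs_nonneg _) (hM 0))
  rw [integral_pos_iff_support_of_nonneg
    (fun p => mul_nonneg (D.K_nonneg p) (h0 _)) hK]
  have hU : {x : ℝ × ℝ | 0 < x.1 ∧ 0 < x.2 ∧ x.1 ≠ x.2 ∧ 0 < φ (x.1 + x.2)} ∈ nhds (p, q) := by
    refine IsOpen.mem_nhds ?_ ⟨hp, hq, hpq, hc⟩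
    refine (isOpen_lt continuous_const continuous_fst).inter
      ((isOpen_lt continuous_const continuous_snd).inter
      ((isOpen_ne_fun continuous_fst continuous_snd).inter
      (isOpen_lt continuous_const (hφ.comp (continuous_fst.add continuous_snd)))))
  rw [mem_nhds_prod_iff] at hU
  obtain ⟨u, hu, v, hv, huv⟩ := hU
  have h1 := (Measure.mem_support_iff_forall p).1 hsp u hu
  have h2 := (Measure.mem_support_iff_forall q).1 hsq v hv
  have h3 : 0 < ((F s).prod (F s)) (u ×ˢ v) := by
    rw [Measure.prod_prod]; exact ENNReal.mul_pos h1.ne' h2.ne'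
  refine lt_of_lt_of_le h3 (measure_mono ?_)
  intro x hx
  obtain ⟨a, b, c, d⟩ := huv hx
  exact (mul_pos (D.K_pos x.1 x.2 a b c) d).ne'

/-- backward persistence of vanishing -/
lemma vanish_back (D : CoagData Kt F γ T C₁ C₂) {φ : ℝ → ℝ} (hφ : Continuous φ)
    (hcs : HasCompactSupport φ) (hts : tsupport φ ⊆ Ioi 0) {M B : ℝ}
    (hM : ∀ v, |φ v| ≤ M) (h0 : ∀ v, 0 ≤ φ v) (hB : ∀ v, φ v ≠ 0 → |v| ^ γ ≤ B)
    (hB0 : 0 ≤ B) {t : ℝ} (ht : t ∈ Icc 0 T) (hz : ∫ v, φ v ∂(F t) = 0) :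
    ∀ s ∈ Icc 0 t, ∫ v, φ v ∂(F s) = 0 := by
  set y : ℝ → ℝ := fun s => ∫ v, φ v ∂(F s) with hy
  have hyc : Continuous y := D.cont φ hφ ⟨M, hM⟩
  have hy0 : ∀ s, 0 ≤ y s := fun s => integral_nonneg h0
  set C : ℝ := C₁ * (B * C₂ + C₂) with hC
  have hC0 : 0 ≤ C := by
    have := D.C₁_nonneg; have := D.C₂_nonneg; positivity
  have hyi : ∀ a b, IntervalIntegrable y volume a b := fun a b => hyc.intervalIntegrable a b
  have key : ∀ s ∈ Icc 0 t, y s ≤ C * ∫ r in s..t, y r := by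
    intro s hs
    have w1 := D.weak φ hφ hcs hts t ht
    have w2 := D.weak φ hφ hcs hts s ⟨hs.1, hs.2.trans ht.2⟩
    have hadd := intervalIntegral.integral_add_adjacent_intervals
      (D.time_int hφ hM 0 s) (D.time_int hφ hM s t)
    have hmono : ∫ r in s..t, -(2 * C) * y r ≤ ∫ r in s..t,
        ∫ p, Kt p * (φ (p.1 + p.2) - φ p.1 - φ p.2) ∂((F r).prod (F r)) := by
      refine intervalIntegral.integral_mono_on hs.2 ((hyi s t).const_mul _)
        (D.time_int hφ hM s t) fun r _ => ?_
      have h1 := D.lower hφ hM h0 hB hB0 r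
      have h2 : 0 ≤ ∫ p, Kt p * φ (p.1 + p.2) ∂((F r).prod (F r)) :=
        integral_nonneg fun p => mul_nonneg (D.K_nonneg p) (h0 _)
      refine le_trans ?_ h1
      have h3 : (C₁ * (2 * (B * C₂ + C₂))) * ∫ v, φ v ∂(F r) = 2 * C * y r := by
        simp only [hC, hy]; ring
      linarith
    rw [intervalIntegral.integral_const_mul] at hmono
    change y t - _ = _ at w1
    change y s - _ = _ at w2
    change y t = 0 at hz
    linarith
  set W : ℝ → ℝ := fun s => ∫ r in s..t, y r with hW
  have hWd : ∀ s, HasDerivAt W (-y s) s := fun s =>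
    intervalIntegral.integral_hasDerivAt_left (hyi s t)
      (hyc.stronglyMeasurableAtFilter _ _) hyc.continuousAt
  have hZd : ∀ s, HasDerivAt (fun s => Real.exp (C * s) * W s)
      (Real.exp (C * s) * C * W s + Real.exp (C * s) * (-y s)) s := by
    intro s
    have h1 : HasDerivAt (fun s => Real.exp (C * s)) (Real.exp (C * s) * C) s := by
      have := ((hasDerivAt_id s).const_mul C).exp
      simpa using this
    exact h1.mul (hWd s)
  have hmon : MonotoneOn (fun s => Real.exp (C * s) * W s) (Icc 0 t) := by
    refine monotoneOn_of_hasDerivWithinAt_nonneg (convex_Icc 0 t)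
      (fun s _ => (hZd s).continuousAt.continuousWithinAt)
      (fun s _ => (hZd s).hasDerivWithinAt) ?_
    intro s hs
    rw [interior_Icc] at hs
    have := key s (Ioo_subset_Icc_self hs)
    have h2 : 0 ≤ Real.exp (C * s) * (C * W s - y s) :=
      mul_nonneg (Real.exp_pos _).le (by linarith)
    linarith
  intro s hs
  have h1 := hmon hs ⟨hs.1.trans hs.2, le_rfl⟩ hs.2
  have h2 : W t = 0 := by simp [hW]
  simp only [h2, mul_zero] at h1
  have h3 : W s ≤ 0 := by
    by_contra hcon
    push Not at hcon
    have := mul_pos (Real.exp_pos (C * s)) hcon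
    linarith
  have h4 := key s hs
  have h5 : C * W s ≤ 0 := mul_nonpos_of_nonneg_of_nonpos hC0 h3
  exact le_antisymm (h4.trans h5) (hy0 s)

end CoagData

/-- tent function -/
def tent (x ε v : ℝ) : ℝ := max 0 (ε - |v - x|)

lemma tent_cont (x ε : ℝ) : Continuous (tent x ε) := by unfold tent; fun_prop

lemma tent_nonneg (x ε v : ℝ) : 0 ≤ tent x ε v := le_max_left _ _

lemma tent_pos_iff (x ε v : ℝ) : 0 < tent x ε v ↔ v ∈ Metric.ball x ε := by
  simp [tent, Real.dist_eq]

lemma tent_ne_iff (x ε v : ℝ) : tent x ε v ≠ 0 ↔ v ∈ Metric.ball x ε := by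
  rw [← tent_pos_iff]
  exact ⟨fun h => lt_of_le_of_ne (tent_nonneg _ _ _) h.symm, fun h => h.ne'⟩

lemma tent_support (x ε : ℝ) : Function.support (tent x ε) = Metric.ball x ε := by
  ext v; exact tent_ne_iff x ε v

lemma tent_tsupport (x ε : ℝ) : tsupport (tent x ε) ⊆ Metric.closedBall x ε := by
  rw [tsupport, tent_support]; exact Metric.closure_ball_subset_closedBall

lemma tent_compact (x ε : ℝ) : HasCompactSupport (tent x ε) :=
  (isCompact_closedBall x ε).of_isClosed_subset (isClosed_tsupport _) (tent_tsupport x ε)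

lemma tent_bound (x : ℝ) {ε : ℝ} (hε : 0 ≤ ε) (v : ℝ) : |tent x ε v| ≤ ε := by
  rw [abs_of_nonneg (tent_nonneg _ _ _)]
  have := abs_nonneg (v - x)
  exact max_le hε (by linarith)

lemma tent_integral_zero_iff (μ : Measure ℝ) [IsFiniteMeasure μ] (x : ℝ) {ε : ℝ} (hε : 0 ≤ ε) :
    ∫ v, tent x ε v ∂μ = 0 ↔ μ (Metric.ball x ε) = 0 := by
  have hi : Integrable (tent x ε) μ := (integrable_const ε).mono'
    (tent_cont x ε).aestronglyMeasurable (Eventually.of_forall fun v => tent_bound x hε v)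
  have h := integral_pos_iff_support_of_nonneg (μ := μ) (tent_nonneg x ε) hi
  rw [tent_support] at h
  have h0 : 0 ≤ ∫ v, tent x ε v ∂μ := integral_nonneg (tent_nonneg x ε)
  constructor
  · intro hz
    by_contra hne
    exact (h.2 (pos_iff_ne_zero.2 hne)).ne' hz
  · intro hz
    by_contra hne
    exact (h.1 (lt_of_le_of_ne h0 (Ne.symm hne))).ne' hz

lemma mem_support_of_ball (μ : Measure ℝ) (x r : ℝ) (hr : 0 < r)
    (h : ∀ ε, 0 < ε → ε < r → μ (Metric.ball x ε) ≠ 0) : x ∈ μ.support := by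
  rw [Measure.mem_support_iff_forall]
  intro U hU
  obtain ⟨ε, hε, hb⟩ := Metric.mem_nhds_iff.1 hU
  have h1 := h (min ε (r / 2)) (by positivity) (lt_of_le_of_lt (min_le_right _ _) (by linarith))
  refine lt_of_lt_of_le (pos_iff_ne_zero.2 h1) (measure_mono ?_)
  exact (Metric.ball_subset_ball (min_le_left _ _)).trans hb

namespace CoagData

variable {Kt : ℝ × ℝ → ℝ} {F : ℝ → Measure ℝ} {γ T C₁ C₂ : ℝ}

lemma tent_ts {x ε : ℝ} (h : ε < x) : tsupport (tent x ε) ⊆ Ioi 0 := by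
  refine (tent_tsupport x ε).trans fun v hv => ?_
  rw [Metric.mem_closedBall, Real.dist_eq, abs_le] at hv
  exact mem_Ioi.2 (by linarith [hv.1])

lemma tent_B (D : CoagData Kt F γ T C₁ C₂) {x ε : ℝ} (hx : 0 < x) (h : ε < x) (v : ℝ)
    (hv : tent x ε v ≠ 0) : |v| ^ γ ≤ (2 * x) ^ γ := by
  rw [tent_ne_iff, Metric.mem_ball, Real.dist_eq, abs_lt] at hv
  refine Real.rpow_le_rpow (abs_nonneg _) ?_ D.γ_pos.le
  rw [abs_le]; constructor <;> linarith [hv.1, hv.2]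

lemma ball_back (D : CoagData Kt F γ T C₁ C₂) {x ε t : ℝ} (hx : 0 < x) (hε : 0 < ε) (h : ε < x)
    (ht : t ∈ Icc 0 T) (hz : F t (Metric.ball x ε) = 0) :
    ∀ s ∈ Icc 0 t, ∫ v, tent x ε v ∂(F s) = 0 := by
  have := D.finite t
  exact D.vanish_back (tent_cont x ε) (tent_compact x ε) (tent_ts h) (tent_bound x hε.le)
    (tent_nonneg x ε) (D.tent_B hx h) (by positivity) ht
    ((tent_integral_zero_iff (F t) x hε.le).2 hz)

lemma support_mono_time (D : CoagData Kt F γ T C₁ C₂) {x t : ℝ} (hx : 0 < x)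
    (ht : t ∈ Icc 0 T) (h0 : x ∈ (F 0).support) : x ∈ (F t).support := by
  refine mem_support_of_ball _ x x hx fun ε hε hεx hz => ?_
  have := D.finite 0
  have h1 := D.ball_back hx hε hεx ht hz 0 ⟨le_rfl, ht.1⟩
  rw [tent_integral_zero_iff _ x hε.le] at h1
  exact ((Measure.mem_support_iff_forall x).1 h0 _ (Metric.ball_mem_nhds x hε)).ne' h1

lemma support_add (D : CoagData Kt F γ T C₁ C₂) {p q : ℝ} (hp : 0 < p) (hq : 0 < q)
    (hpq : p ≠ q) (hsp : ∀ s ∈ Ioc 0 T, p ∈ (F s).support)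
    (hsq : ∀ s ∈ Ioc 0 T, q ∈ (F s).support) :
    ∀ s ∈ Ioc 0 T, p + q ∈ (F s).support := by
  intro t ht
  have hx : 0 < p + q := by linarith
  refine mem_support_of_ball _ _ (p + q) hx fun ε hε hεx hz => ?_
  have htI : t ∈ Icc 0 T := ⟨ht.1.le, ht.2⟩
  have h1 := D.ball_back hx hε hεx htI hz
  have w := D.weak _ (tent_cont (p + q) ε) (tent_compact _ ε) (tent_ts hεx) t htI
  rw [h1 t ⟨ht.1.le, le_rfl⟩, h1 0 ⟨le_rfl, ht.1.le⟩] at w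
  have hpos := intervalIntegral.intervalIntegral_pos_of_pos_on
    (D.time_int (tent_cont (p + q) ε) (tent_bound (p + q) hε.le) 0 t) (fun s hs => by
      have hl := D.lower (tent_cont (p + q) ε) (tent_bound _ hε.le) (tent_nonneg _ ε)
        (D.tent_B hx hεx) (by positivity) s
      rw [h1 s (Ioo_subset_Icc_self hs), mul_zero, sub_zero] at hl
      have hsT : s ∈ Ioc 0 T := ⟨hs.1, hs.2.le.trans ht.2⟩
      exact lt_of_lt_of_le (D.gain_pos (tent_cont (p + q) ε) (tent_bound _ hε.le)
        (tent_nonneg _ ε) s hp hq hpq (hsp s hsT) (hsq s hsT)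
        ((tent_pos_iff _ _ _).2 (Metric.mem_ball_self hε))) hl) ht.1
  linarith

lemma tails (D : CoagData Kt F γ T C₁ C₂) {a b : ℝ} (ha : 0 < a) (hb : 0 < b) (hab : a ≠ b)
    (hsa : a ∈ (F 0).support) (hsb : b ∈ (F 0).support) {t : ℝ} (ht : t ∈ Ioc 0 T) (R : ℝ) :
    0 < F t (Ici R) := by
  have hb' : ∀ s ∈ Ioc 0 T, b ∈ (F s).support := fun s hs =>
    D.support_mono_time hb ⟨hs.1.le, hs.2⟩ hsb
  have hn : ∀ n : ℕ, ∀ s ∈ Ioc 0 T, a + n * b ∈ (F s).support := by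
    intro n
    induction n with
    | zero => 
      intro s hs
      simpa using D.support_mono_time ha ⟨hs.1.le, hs.2⟩ hsa
    | succ n ih =>
      have hne : a + n * b ≠ b := by
        rcases Nat.eq_zero_or_pos n with h | h
        · simpa [h] using hab
        · have : (1 : ℝ) ≤ n := by exact_mod_cast h
          have : b ≤ n * b := by nlinarith
          intro h'; linarith
      have := D.support_add (by positivity) hb hne ih hb'
      intro s hs
      have := this s hs
      push_cast
      rwa [add_mul, one_mul, ← add_assoc]
  obtain ⟨n, hnR⟩ := exists_nat_gt (R / b)
  have h1 : R < a + n * b := by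
    rw [div_lt_iff₀ hb] at hnR; linarith
  exact (Measure.mem_support_iff_forall _).1 (hn n t ht) _ (Ici_mem_nhds h1)

end CoagData

/-- two distinct positive points in the support -/
lemma exists_two_points (μ : Measure ℝ) [IsFiniteMeasure μ] (hc : μ (Iic 0) = 0) (hne : μ ≠ 0)
    (hd : ¬ IsSingleDirac μ) :
    ∃ a b, 0 < a ∧ 0 < b ∧ a ≠ b ∧ a ∈ μ.support ∧ b ∈ μ.support := by
  have hae : ∀ᵐ x ∂μ, x ∈ μ.support ∧ 0 < x := by
    have h1 : ∀ᵐ x ∂μ, x ∈ μ.support := Measure.support_mem_ae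
    have h2 : ∀ᵐ x ∂μ, 0 < x := by
      rw [ae_iff]; simpa [Iic] using hc
    exact h1.and h2
  have : (ae μ).NeBot := ae_neBot.2 hne
  obtain ⟨a, ha, ha0⟩ := hae.exists
  by_contra hcon
  push Not at hcon
  have hall : ∀ᵐ x ∂μ, x = a := by
    filter_upwards [hae] with x hx
    by_contra hxa
    exact hcon a x ha0 hx.2 (Ne.symm hxa) ha hx.1
  apply hd
  have hmu : μ = μ univ • Measure.dirac a := by
    ext s hs
    rw [Measure.smul_apply, Measure.dirac_apply' _ hs, smul_eq_mul]
    by_cases h : a ∈ s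
    · simp only [h, indicator_of_mem, Pi.one_apply, mul_one]
      refine measure_congr ?_
      filter_upwards [hall] with x hx
      subst hx
      exact propext ⟨fun _ => trivial, fun _ => h⟩
    · simp only [h, not_false_eq_true, indicator_of_notMem, mul_zero]
      refine measure_mono_null (t := {x | ¬ x = a}) ?_ hall
      rintro x hx rfl
      exact h hx
  refine ⟨μ.real univ, a, ?_, ha0, ?_⟩
  · exact ENNReal.toReal_pos (by simpa using hne) (measure_ne_top _ _)
  · rw [Measure.real, ENNReal.ofReal_toReal (measure_ne_top _ _)]; exact hmu

section kernel

variable {K h : ℝ → ℝ → ℝ} {g : ℝ → ℝ} {γ H H₀ H₁ G₀ G₁ k : ℝ}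

lemma ratio_mem {v v' : ℝ} (hv : 0 < v) (hv' : 0 < v') : v / (v + v') ∈ Icc (0 : ℝ) 1 :=
  ⟨by positivity, (div_le_one (by positivity)).2 (by linarith)⟩

lemma kernel_contOn (hK : KernelAssumptionA K h g γ H H₀ H₁ G₀ G₁ k) :
    ContinuousOn (fun p : ℝ × ℝ => K p.1 p.2) (Ioi 0 ×ˢ Ioi 0) := by
  have h1 : ContinuousOn (fun p : ℝ × ℝ => h p.1 p.2) (Ioi 0 ×ˢ Ioi 0) :=
    hK.h_cont.mono (prod_mono Ioi_subset_Ici_self Ioi_subset_Ici_self)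
  have h2 : ContinuousOn (fun p : ℝ × ℝ => g (p.1 / (p.1 + p.2))) (Ioi 0 ×ˢ Ioi 0) := by
    refine hK.g_cont.comp (f := fun p : ℝ × ℝ => p.1 / (p.1 + p.2)) ?_ ?_
    · refine ContinuousOn.div (by fun_prop) (by fun_prop) ?_
      rintro ⟨v, v'⟩ ⟨hv, hv'⟩
      exact (add_pos hv hv').ne'
    · rintro ⟨v, v'⟩ ⟨hv, hv'⟩
      exact ratio_mem hv hv'
  refine (h1.mul h2).congr ?_
  rintro ⟨v, v'⟩ ⟨hv, hv'⟩
  exact hK.K_eq v v' (le_of_lt hv) (le_of_lt hv') (add_pos hv hv')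

lemma kernel_upper (hK : KernelAssumptionA K h g γ H H₀ H₁ G₀ G₁ k) {v v' : ℝ} (hv : 0 < v)
    (hv' : 0 < v') : K v v' ≤ (H₁ * G₁) * (|v| ^ γ + |v'| ^ γ) := by
  rw [hK.K_eq v v' hv.le hv'.le (by linarith), abs_of_pos hv, abs_of_pos hv']
  have hx := ratio_mem hv hv'
  have hg0 : 0 ≤ g (v / (v + v')) := by
    refine le_trans ?_ (hK.g_lower _ hx)
    have := hK.G₀_pos
    positivity
  have h1 := mul_le_mul_of_nonneg_right (hK.h_upper v v' hv.le hv'.le) hg0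
  have h2 : 0 ≤ H₁ * (v ^ γ + v' ^ γ) := by
    have := hK.H₁_pos
    positivity
  have h3 := mul_le_mul_of_nonneg_left (hK.g_upper _ hx) h2
  linarith

lemma kernel_pos (hK : KernelAssumptionA K h g γ H H₀ H₁ G₀ G₁ k) {v v' : ℝ} (hv : 0 < v)
    (hv' : 0 < v') (hne : v ≠ v') : 0 < K v v' := by
  rw [hK.K_eq v v' hv.le hv'.le (by linarith)]
  have hx := ratio_mem hv hv'
  refine mul_pos ?_ ?_
  · obtain ⟨C, hC, hh⟩ := hK.h_posOn (v + v' + 1 / v + 1 / v') (by positivity)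
    have i1 : 0 < 1 / v := by positivity
    have i2 : 0 < 1 / v' := by positivity
    refine lt_of_lt_of_le hC (hh v ⟨?_, by linarith⟩ v' ⟨?_, by linarith⟩)
    · exact (one_div_le (by positivity) hv).2 (by linarith)
    · exact (one_div_le (by positivity) hv').2 (by linarith)
  · refine lt_of_lt_of_le (mul_pos hK.G₀_pos (Real.rpow_pos_of_pos (abs_pos.2 ?_) k))
      (hK.g_lower _ hx)
    intro h0
    apply hne
    have : v + v' ≠ 0 := by positivity
    field_simp at h0
    linarith

lemma pos_of_conc {μ : Measure ℝ} (hc : μ (Iic 0) = 0) : ∀ᵐ v ∂μ, 0 < v := by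
  rw [ae_iff]; simpa [Iic] using hc

lemma finite_of_moment {μ : Measure ℝ} (hc : μ (Iic 0) = 0)
    (hi : Integrable (fun v : ℝ => 1 + v ^ γ) μ) : IsFiniteMeasure μ := by
  have : Integrable (fun _ : ℝ => (1 : ℝ)) μ := by
    refine hi.mono' aestronglyMeasurable_const ?_
    filter_upwards [pos_of_conc hc] with v hv
    have : 0 ≤ v ^ γ := by positivity
    rw [norm_one]; linarith
  rcases (integrable_const_iff (c := (1 : ℝ))).1 this with h | h
  · norm_num at h
  · exact h

lemma moment_split {μ : Measure ℝ} (hc : μ (Iic 0) = 0) {C : ℝ}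
    (hi : Integrable (fun v : ℝ => 1 + v ^ γ) μ) (hC : ∫ v, (1 + v ^ γ) ∂μ ≤ C) :
    Integrable (fun v : ℝ => |v| ^ γ) μ ∧ ∫ v, |v| ^ γ ∂μ ≤ C ∧ μ.real univ ≤ C := by
  have := finite_of_moment hc hi
  have h1 : Integrable (fun v : ℝ => v ^ γ) μ := by
    have := hi.sub (integrable_const (1 : ℝ))
    refine this.congr (Eventually.of_forall fun v => ?_)
    simp
  have hae : (fun v : ℝ => v ^ γ) =ᵐ[μ] fun v => |v| ^ γ := by
    filter_upwards [pos_of_conc hc] with v hv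
    rw [abs_of_pos hv]
  rw [integral_add (integrable_const 1) h1, integral_congr_ae hae] at hC
  have h2 : 0 ≤ ∫ v, |v| ^ γ ∂μ := integral_nonneg fun v => by positivity
  have h3 : 0 ≤ μ.real univ := measureReal_nonneg
  simp only [integral_const, smul_eq_mul, mul_one] at hC
  exact ⟨h1.congr hae, by linarith, by linarith⟩

end kernel

/-- clamp time to `[0,T]` -/
def clampT (T s : ℝ) : ℝ := max 0 (min s T)

lemma clampT_mem {T : ℝ} (hT : 0 < T) (s : ℝ) : clampT T s ∈ Icc 0 T :=
  ⟨le_max_left _ _, max_le hT.le (min_le_right _ _)⟩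

lemma clampT_eq {T s : ℝ} (hs : s ∈ Icc 0 T) : clampT T s = s := by
  rw [clampT, min_eq_left hs.2, max_eq_right hs.1]

lemma coagData_of {K h : ℝ → ℝ → ℝ} {g : ℝ → ℝ} {γ H H₀ H₁ G₀ G₁ k : ℝ}
    (hK : KernelAssumptionA K h g γ H H₀ H₁ G₀ G₁ k)
    {T : ℝ} (hT : 0 < T) {fin : Measure ℝ}
    {f : ℝ → Measure ℝ} (hf : IsWeakSolution K γ T f fin) :
    ∃ C₂, CoagData ((Ioi (0 : ℝ) ×ˢ Ioi (0 : ℝ)).indicator fun p => K p.1 p.2)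
      (fun s => f (clampT T s)) γ T (H₁ * G₁) C₂ := by
  obtain ⟨C, hC⟩ := hf.moment_bound
  have hms : MeasurableSet (Ioi (0 : ℝ) ×ˢ Ioi (0 : ℝ)) := measurableSet_Ioi.prod measurableSet_Ioi
  have hHG : 0 ≤ H₁ * G₁ := (mul_pos hK.H₁_pos hK.G₁_pos).le
  have hsplit := fun s => moment_split (hf.conc _ (clampT_mem hT s))
    (hC _ (clampT_mem hT s)).1 (hC _ (clampT_mem hT s)).2
  have hfin : ∀ s, IsFiniteMeasure (f (clampT T s)) := fun s =>
    finite_of_moment (hf.conc _ (clampT_mem hT s)) (hC _ (clampT_mem hT s)).1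
  have hKm : Measurable ((Ioi (0 : ℝ) ×ˢ Ioi (0 : ℝ)).indicator fun p => K p.1 p.2) := by
    classical
    rw [← piecewise_eq_indicator]
    exact (kernel_contOn hK).measurable_piecewise continuousOn_const hms
  have hKn : ∀ p, 0 ≤ (Ioi (0 : ℝ) ×ˢ Ioi (0 : ℝ)).indicator (fun p => K p.1 p.2) p := by
    intro p
    refine indicator_nonneg ?_ p
    rintro ⟨v, v'⟩ ⟨hv, hv'⟩
    exact hK.K_nonneg v v' (le_of_lt hv) (le_of_lt hv')
  have hKl : ∀ p, (Ioi (0 : ℝ) ×ˢ Ioi (0 : ℝ)).indicator (fun p => K p.1 p.2) p ≤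
      (H₁ * G₁) * (|p.1| ^ γ + |p.2| ^ γ) := by
    intro p
    refine indicator_apply_le' ?_ ?_
    · rintro ⟨hv, hv'⟩
      exact kernel_upper hK hv hv'
    · intro _
      positivity
  have hweak0 : ∀ φ : ℝ → ℝ, Continuous φ → HasCompactSupport φ →
      tsupport φ ⊆ Ioi 0 → ∫ v, φ v ∂(f 0) = ∫ v, φ v ∂fin := by
    intro φ h1 h2 h3
    have := hf.weak_form φ h1 h2 h3 0 ⟨le_rfl, hT.le⟩
    simp at this
    linarith
  refine ⟨C, ?_⟩
  have D0 : CoagData ((Ioi (0 : ℝ) ×ˢ Ioi (0 : ℝ)).indicator fun p => K p.1 p.2)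
      (fun s => f (clampT T s)) γ (-1) (H₁ * G₁) C :=
    { finite := hfin
      conc := fun s => hf.conc _ (clampT_mem hT s)
      cont := by
        intro φ h1 h2
        have := hf.time_cont φ h1 h2
        refine this.comp_continuous (f := clampT T) ?_ (clampT_mem hT)
        unfold clampT; fun_prop
      γ_pos := by linarith [hK.γ_gt_one]
      C₁_nonneg := hHG
      K_meas := hKm
      K_nonneg := hKn
      K_le := hKl
      K_pos := by
        intro v v' hv hv' hne
        rw [indicator_of_mem (show (v, v') ∈ Ioi (0 : ℝ) ×ˢ Ioi (0 : ℝ) from ⟨hv, hv'⟩)]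
        exact kernel_pos hK hv hv' hne
      w_int := fun s => (hsplit s).1
      w_le := fun s => (hsplit s).2.1
      univ_le := fun s => (hsplit s).2.2
      weak := by
        intro φ _ _ _ t ht
        exact absurd (ht.1.trans ht.2) (by norm_num) }
  refine { D0 with weak := ?_ }
  intro φ h1 h2 h3 t ht
  obtain ⟨M, hM⟩ := h2.exists_bound_of_continuous h1
  rw [clampT_eq ht, clampT_eq ⟨le_rfl, hT.le⟩, hweak0 φ h1 h2 h3, hf.weak_form φ h1 h2 h3 t ht]
  congr 1
  refine intervalIntegral.integral_congr fun s hs => ?_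
  rw [uIcc_of_le ht.1] at hs
  have hsT : s ∈ Icc 0 T := ⟨hs.1, hs.2.trans ht.2⟩
  have hprodInt := D0.intg_int h1 hM s
  simp only [clampT_eq hsT] at hprodInt ⊢
  have hfs : IsFiniteMeasure (f s) := by
    have := hfin s; rwa [clampT_eq hsT] at this
  rw [integral_prod _ hprodInt]
  have hpos := pos_of_conc (hf.conc s hsT)
  refine integral_congr_ae ?_
  filter_upwards [hpos] with v hv
  refine integral_congr_ae ?_
  filter_upwards [hpos] with v' hv'
  rw [indicator_of_mem (show (v, v') ∈ Ioi (0 : ℝ) ×ˢ Ioi (0 : ℝ) from ⟨hv, hv'⟩)]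

/-- **Positivity.** If the initial datum is nonzero and not a single
Dirac measure, then for every `t ∈ (0,T]` and every `R > 0` the solution charges
`[R,∞)` by a positive constant `C(t,R)`. -/
theorem positivity_of_tails
    (K h : ℝ → ℝ → ℝ) (g : ℝ → ℝ) (γ H H₀ H₁ G₀ G₁ k : ℝ)
    (hK : KernelAssumptionA K h g γ H H₀ H₁ G₀ G₁ k)
    (T : ℝ) (hT : 0 < T)
    (fin : Measure ℝ) (hconc : fin (Iic 0) = 0) (hne : fin ≠ 0)
    (hγmom : Integrable (fun v => 1 + v ^ γ) fin)
    (hdirac : ¬ IsSingleDirac fin)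
    (f : ℝ → Measure ℝ) (hf : IsWeakSolution K γ T f fin)
    (hmc : IsMassConserving T f fin) :
    ∀ t ∈ Ioc (0 : ℝ) T, ∀ R : ℝ, 0 < R → ∃ C : ℝ, 0 < C ∧
      ENNReal.ofReal C ≤ f t (Ici R) ∧ 0 < f t (Ici R) := by
  obtain ⟨C₂, D⟩ := coagData_of hK hT hf
  have hfinfin : IsFiniteMeasure fin := finite_of_moment hconc hγmom
  obtain ⟨a, b, ha, hb, hab, hsa, hsb⟩ := exists_two_points fin hconc hne hdirac
  have h00 : clampT T 0 = 0 := clampT_eq ⟨le_rfl, hT.le⟩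
  have hsupp : ∀ x, 0 < x → x ∈ fin.support → x ∈ (f (clampT T 0)).support := by
    intro x hx hxs
    refine mem_support_of_ball _ x x hx fun ε hε hεx hz => ?_
    have := D.finite 0
    rw [← tent_integral_zero_iff _ x hε.le, h00] at hz
    have hw := hf.weak_form _ (tent_cont x ε) (tent_compact x ε) (CoagData.tent_ts hεx) 0
      ⟨le_rfl, hT.le⟩
    rw [hz, intervalIntegral.integral_same] at hw
    have hz2 : ∫ v, tent x ε v ∂fin = 0 := by linarith
    rw [tent_integral_zero_iff _ x hε.le] at hz2
    exact ((Measure.mem_support_iff_forall x).1 hxs _ (Metric.ball_mem_nhds x hε)).ne' hz2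
  intro t ht R _
  have htI : t ∈ Icc 0 T := ⟨ht.1.le, ht.2⟩
  have hpos := D.tails ha hb hab (hsupp a ha hsa) (hsupp b hb hsb) ht R
  have hfin := D.finite t
  simp only [clampT_eq htI] at hpos hfin
  refine ⟨(f t (Ici R)).toReal, ENNReal.toReal_pos hpos.ne' (measure_ne_top _ _), ?_, hpos⟩
  rw [ENNReal.ofReal_toReal (measure_ne_top _ _)]
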